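/- r̃(3) = 6; that is, the tilde-system of order (3, 6) admits no non-trivial solution, while the tilde-system of order (3, 5) does admit a non-trivial solution (for instance p₁ = p₂ = p₃ = 1, q_{1,l} = q_{2,l} = q_{3,l} = 0 for l = 1,2,3, q_{4,1} = √3/3, q_{4,2} = −√3/3, q_{4,3} = 0, q_{5,1} = q_{5,2} = −1/6, q_{5,3} = 0). -/

import Mathlib

/-- The index set `J_{ℓ₁,ℓ₂} = {α ∈ ℕ⁵ : α₁+2α₂+α₃ = ℓ₁, α₃+α₄+2α₅ = ℓ₂}`
(as a finite set of quintuples). -/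
def Jset (l1 l2 : ℕ) : Finset (ℕ × ℕ × ℕ × ℕ × ℕ) :=
  (Finset.range (l1 + 1) ×ˢ Finset.range (l1 + 1) ×ˢ Finset.range (l1 + 1) ×ˢ
      Finset.range (l2 + 1) ×ˢ Finset.range (l2 + 1)).filter
    (fun α => α.1 + 2 * α.2.1 + α.2.2.1 = l1 ∧ α.2.2.1 + α.2.2.2.1 + 2 * α.2.2.2.2 = l2)

/-- The `(ℓ₁, ℓ₂)`-equation of the tilde-system:
`Σ_{l=1}^m Σ_{α ∈ J_{ℓ₁,ℓ₂}} p_l² q_{1,l}^{α₁} ⋯ q_{5,l}^{α₅} / (α₁!⋯α₅!)`. -/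
noncomputable def tildeEq (m : ℕ) (p q1 q2 q3 q4 q5 : Fin m → ℝ) (l1 l2 : ℕ) : ℝ :=
  ∑ l : Fin m, ∑ α ∈ Jset l1 l2,
    p l ^ 2 * q1 l ^ α.1 * q2 l ^ α.2.1 * q3 l ^ α.2.2.1 * q4 l ^ α.2.2.2.1 *
        q5 l ^ α.2.2.2.2 /
      ((α.1.factorial : ℝ) * (α.2.1.factorial : ℝ) * (α.2.2.1.factorial : ℝ) *
        (α.2.2.2.1.factorial : ℝ) * (α.2.2.2.2.factorial : ℝ))

/-- The tilde-system of order `(m, r)` admits a non-trivial solution: there are reals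
`p_l, q_{1,l}, …, q_{5,l}` with all `p_l ≠ 0` and some `q_{4,l} ≠ 0` satisfying the
equations for all `ℓ₁, ℓ₂ ≥ 0` with `1 ≤ ℓ₁ + ℓ₂ ≤ r`. -/
def tildeSol (m r : ℕ) : Prop :=
  ∃ p q1 q2 q3 q4 q5 : Fin m → ℝ,
    (∀ l, p l ≠ 0) ∧ (∃ l, q4 l ≠ 0) ∧
    ∀ l1 l2 : ℕ, 1 ≤ l1 + l2 → l1 + l2 ≤ r → tildeEq m p q1 q2 q3 q4 q5 l1 l2 = 0

/-- `r̃(m)`: the smallest positive integer `r` such that the tilde-system of order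
`(m, r)` admits no non-trivial solution. -/
noncomputable def rtilde (m : ℕ) : ℕ := sInf {r : ℕ | 1 ≤ r ∧ ¬ tildeSol m r}

/-!
Only the equations with `ℓ₁ = 0` matter for non-existence: up to order `r` they say that
`∑ l, p l ^ 2 * exp (q4 l * t + q5 l * t ^ 2)` is a constant `W` plus `O(t ^ (r + 1))`. If
`b₀ = min q5` is negative (the second order equation forces this), then after multiplication by
`exp (-b₀ * t ^ 2)` the difference with `W` is the moment generating function of a signed mixture of
`m + 1` Gaussians, possibly degenerate to Dirac masses, whose moments up to order `r` vanish. The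
density of `j + 1` nondegenerate Gaussians has at most `2 * j` sign changes: a Gaussian is the
Laplace transform of a Gaussian, Laplace transforms do not increase the number of sign changes, and
Rolle's theorem allows one further exponential at the price of two derivatives. A polynomial of
degree at most `2 * m` vanishing at these sign changes, and doubly at the Dirac masses, shows that
the density is zero as soon as `r = 2 * m`. Then the weights of the Dirac masses sum to zero,
although they are the positive weights `p l ^ 2` of the terms with `q5 l = b₀`.

For `m = 3` the order `2 * m - 1 = 5` is attained by Gauss–Hermite quadrature.
-/

open Real MeasureTheory ProbabilityTheory Filter Topology
open scoped NNReal Polynomial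
open Finset.HasAntidiagonal (antidiagonal)

section SignChanges

/-- `f` changes sign between `x` and `y`. -/
def SignChange (f : ℝ → ℝ) (x y : ℝ) : Prop := x < y ∧ f x * f y < 0

/-- `f` changes sign at most `n` times: no increasing list of more than `n + 1` points carries
values of `f` of strictly alternating sign. -/
def SignChangesLE (n : ℕ) (f : ℝ → ℝ) : Prop :=
  ∀ l : List ℝ, l.IsChain (SignChange f) → l.length ≤ n + 1

/-- A list of points carrying values of `f` of strictly alternating sign, the first of them
negative, has at most `n` points. Equivalently, `f` changes sign at most `n` times when it is
considered positive near `-∞`: this is what an induction over sign changes can carry along. -/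
def NegHeadLengthLE (n : ℕ) (f : ℝ → ℝ) : Prop :=
  ∀ a l, (a :: l).IsChain (SignChange f) → f a < 0 → (a :: l).length ≤ n

variable {n : ℕ} {f : ℝ → ℝ}

lemma SignChange.of_neg {x y : ℝ} (h : SignChange (fun x => -f x) x y) : SignChange f x y :=
  ⟨h.1, by simpa using h.2⟩

lemma SignChange.isChain_of_isChain_sub_mul {z a : ℝ} {l : List ℝ} (ha : z < a)
    (hl : (a :: l).IsChain (SignChange fun x => (x - z) * f x)) :
    (a :: l).IsChain (SignChange f) := by
  induction l generalizing a with
  | nil => simp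
  | cons b l ih =>
    obtain ⟨⟨hab, hneg⟩, htail⟩ := List.isChain_cons_cons.1 hl
    refine List.isChain_cons_cons.2 ⟨⟨hab, ?_⟩, ih (ha.trans hab) htail⟩
    have : (a - z) * (b - z) * (f a * f b) < 0 := by linear_combination hneg
    exact neg_of_mul_neg_right this (mul_pos (sub_pos.2 ha) (sub_pos.2 (ha.trans hab))).le

namespace NegHeadLengthLE

lemma neg_of_not_bddBelow (hf : NegHeadLengthLE (n + 1) f) (hbdd : ¬BddBelow {x | f x < 0}) :
    NegHeadLengthLE n fun x => -f x := by
  intro a l hl ha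
  obtain ⟨x, hx, hxa⟩ := not_bddBelow_iff.1 hbdd a
  have hxl : (x :: a :: l).IsChain (SignChange f) := List.isChain_cons_cons.2
    ⟨⟨hxa, mul_neg_of_neg_of_pos hx (neg_lt_zero.1 ha)⟩, hl.imp fun _ _ => .of_neg⟩
  simpa using hf x (a :: l) hxl hx

/-- `f` has its first sign change at the infimum, and the linear factor removes it. -/
lemma neg_sub_sInf_mul (hf : NegHeadLengthLE (n + 1) f) (hne : {x | f x < 0}.Nonempty)
    (hbdd : BddBelow {x | f x < 0}) :
    NegHeadLengthLE n fun x => -((x - sInf {x | f x < 0}) * f x) := by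
  intro a l hl ha
  have hprod : 0 < (a - sInf {x | f x < 0}) * f a := neg_lt_zero.1 ha
  have hfa : 0 < f a := by
    rcases lt_trichotomy (f a) 0 with h | h | h
    · exact absurd hprod (mul_nonpos_of_nonneg_of_nonpos
        (sub_nonneg.2 (csInf_le hbdd h)) h.le).not_gt
    · simp [h] at hprod
    · exact h
  have hza : sInf {x | f x < 0} < a := sub_pos.1 (pos_of_mul_pos_left hprod hfa.le)
  obtain ⟨x, hx, hxa⟩ := exists_lt_of_csInf_lt hne hza
  have hxl : (x :: a :: l).IsChain (SignChange f) := List.isChain_cons_cons.2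
    ⟨⟨hxa, mul_neg_of_neg_of_pos hx hfa⟩,
      SignChange.isChain_of_isChain_sub_mul hza (hl.imp fun _ _ => .of_neg)⟩
  simpa using hf x (a :: l) hxl hx

lemma exists_prod_sub (hf : NegHeadLengthLE n f) :
    ∃ c : ℝ, c ≠ 0 ∧ ∃ Z : Multiset ℝ, Z.card ≤ n ∧
      ∀ x, 0 ≤ c * (Z.map (x - ·)).prod * f x := by
  induction n generalizing f with
  | zero =>
    refine ⟨1, one_ne_zero, 0, by simp, fun x => ?_⟩
    have : 0 ≤ f x := not_lt.1 fun hx => by simpa using hf x [] (by simp) hx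
    simpa using this
  | succ n ih =>
    rcases Set.eq_empty_or_nonempty {x | f x < 0} with hempty | hne
    · refine ⟨1, one_ne_zero, 0, by simp, fun x => ?_⟩
      have : 0 ≤ f x := not_lt.1 (Set.eq_empty_iff_forall_notMem.1 hempty x)
      simpa using this
    by_cases hbdd : BddBelow {x | f x < 0}
    · obtain ⟨c, hc, Z, hZ, hsign⟩ := ih (hf.neg_sub_sInf_mul hne hbdd)
      refine ⟨-c, neg_ne_zero.2 hc, sInf {x | f x < 0} ::ₘ Z, by simpa using hZ, fun x => ?_⟩
      simp only [Multiset.map_cons, Multiset.prod_cons]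
      linear_combination hsign x
    · obtain ⟨c, hc, Z, hZ, hsign⟩ := ih (hf.neg_of_not_bddBelow hbdd)
      exact ⟨-c, neg_ne_zero.2 hc, Z, hZ.trans n.le_succ, fun x => by
        linear_combination hsign x⟩

end NegHeadLengthLE

namespace SignChangesLE

lemma mono {k : ℕ} (hf : SignChangesLE n f) (h : n ≤ k) : SignChangesLE k f :=
  fun l hl => (hf l hl).trans (Nat.add_le_add_right h 1)

lemma nonneg_mul {c : ℝ → ℝ} (hf : SignChangesLE n f) (hc : ∀ x, 0 ≤ c x) :
    SignChangesLE n fun x => c x * f x := by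
  refine fun l hl => hf l (hl.imp fun x y h => ⟨h.1, ?_⟩)
  have : c x * c y * (f x * f y) < 0 := by linear_combination h.2
  exact neg_of_mul_neg_right this (mul_nonneg (hc x) (hc y))

lemma const (c : ℝ) : SignChangesLE 0 fun _ => c := by
  rintro (_ | ⟨x, _ | ⟨y, l⟩⟩) hl
  · simp
  · simp
  · exact absurd (List.isChain_cons_cons.1 hl).1.2 (mul_self_nonneg c).not_gt

lemma of_tendsto {ι : Type*} {u : Filter ι} [u.NeBot] {F : ι → ℝ → ℝ}
    (hF : ∀ᶠ i in u, SignChangesLE n (F i)) (hlim : ∀ x, Tendsto (F · x) u (𝓝 (f x))) :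
    SignChangesLE n f := by
  intro l hl
  have hev : ∀ᶠ i in u, l.IsChain (SignChange (F i)) := by
    induction hl with
    | nil => simp
    | singleton => simp
    | cons_cons h _ ih =>
      filter_upwards [ih, ((hlim _).mul (hlim _)).eventually_lt_const h.2] with i hi hlt
      exact List.isChain_cons_cons.2 ⟨⟨h.1, hlt⟩, hi⟩
  obtain ⟨i, hi, hchain⟩ := (hF.and hev).exists
  exact hi l hchain

lemma exists_isChain_deriv {f' : ℝ → ℝ} (hf : ∀ x, HasDerivAt f (f' x) x) (a b : ℝ)
    (l : List ℝ) (hl : (a :: b :: l).IsChain (SignChange f)) :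
    ∃ c l', a < c ∧ 0 < f' c * f b ∧ l'.length = l.length ∧
      (c :: l').IsChain (SignChange f') := by
  obtain ⟨⟨hab, hfab⟩, htail⟩ := List.isChain_cons_cons.1 hl
  obtain ⟨c, ⟨hac, hcb⟩, hc⟩ := exists_hasDerivAt_eq_slope f f' hab
    (fun x _ => (hf x).continuousAt.continuousWithinAt) fun x _ => hf x
  have hcsign : 0 < f' c * f b := by
    rw [hc, div_mul_eq_mul_div]
    exact div_pos (by nlinarith [mul_self_nonneg (f b)]) (sub_pos.2 hab)
  cases l with
  | nil => exact ⟨c, [], hac, hcsign, rfl, by simp⟩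
  | cons d l =>
    obtain ⟨e, l', hbe, hesign, hlen, hchain⟩ := exists_isChain_deriv hf b d l htail
    have hfbd : f b * f d < 0 := (List.isChain_cons_cons.1 htail).1.2
    refine ⟨c, e :: l', hac, hcsign, by simp [hlen],
      List.isChain_cons_cons.2 ⟨⟨hcb.trans hbe, ?_⟩, hchain⟩⟩
    have : (f' c * f' e) * (f b * f d) > 0 := by
      linear_combination mul_pos hcsign hesign
    exact neg_of_mul_pos_left this hfbd.le

/-- Rolle's theorem for sign changes. -/
lemma of_hasDerivAt {f' : ℝ → ℝ} (hf : ∀ x, HasDerivAt f (f' x) x) (hf' : SignChangesLE n f') :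
    SignChangesLE (n + 1) f := by
  rintro (_ | ⟨a, _ | ⟨b, l⟩⟩) hl
  · simp
  · simp
  · obtain ⟨c, l', -, -, hlen, hchain⟩ := exists_isChain_deriv hf a b l hl
    simpa [hlen] using hf' _ hchain

lemma negHeadLengthLE_or_neg (hf : SignChangesLE n f) :
    NegHeadLengthLE n f ∨ NegHeadLengthLE n fun x => -f x := by
  by_contra! h
  simp only [NegHeadLengthLE, not_forall, not_le] at h
  obtain ⟨⟨a, l, hl, ha, hlen⟩, b, l', hl', hb, hlen'⟩ := h
  replace hb : 0 < f b := neg_lt_zero.1 hb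
  replace hl' : (b :: l').IsChain (SignChange f) := hl'.imp fun _ _ => .of_neg
  rcases lt_trichotomy a b with hab | rfl | hba
  · have := hf (a :: b :: l') (List.isChain_cons_cons.2 ⟨⟨hab, mul_neg_of_neg_of_pos ha hb⟩, hl'⟩)
    simp only [List.length_cons] at this hlen'
    omega
  · exact hb.not_gt ha
  · have := hf (b :: a :: l) (List.isChain_cons_cons.2 ⟨⟨hba, mul_neg_of_pos_of_neg hb ha⟩, hl⟩)
    simp only [List.length_cons] at this hlen
    omega

lemma exists_prod_sub (hf : SignChangesLE n f) :
    ∃ c : ℝ, c ≠ 0 ∧ ∃ Z : Multiset ℝ, Z.card ≤ n ∧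
      ∀ x, 0 ≤ c * (Z.map (x - ·)).prod * f x := by
  rcases hf.negHeadLengthLE_or_neg with h | h
  · exact h.exists_prod_sub
  · obtain ⟨c, hc, Z, hZ, hsign⟩ := h.exists_prod_sub
    exact ⟨-c, neg_ne_zero.2 hc, Z, hZ, fun x => by linear_combination hsign x⟩

end SignChangesLE

end SignChanges

/-- The two-sided Laplace transform of the density `g` with respect to `μ`, with the sign convention
of moment generating functions. -/
noncomputable def laplace (μ : Measure ℝ) (g : ℝ → ℝ) (t : ℝ) : ℝ := ∫ y, exp (t * y) * g y ∂μ

/-- Absolute convergence of `laplace μ g` on the whole real line. -/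
def ExpIntegrable (μ : Measure ℝ) (g : ℝ → ℝ) : Prop :=
  ∀ t, Integrable (fun y => exp (t * y) * g y) μ

lemma exp_mul_le_add_of_mem_Icc {a b s : ℝ} (hs : s ∈ Set.Icc a b) (y : ℝ) :
    exp (s * y) ≤ exp (a * y) + exp (b * y) := by
  rcases le_total 0 y with hy | hy
  · exact (exp_le_exp.2 (mul_le_mul_of_nonneg_right hs.2 hy)).trans
      (le_add_of_nonneg_left (exp_pos _).le)
  · exact (exp_le_exp.2 (mul_le_mul_of_nonpos_right hs.1 hy)).trans
      (le_add_of_nonneg_right (exp_pos _).le)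

section Laplace

variable {μ : Measure ℝ} {f g : ℝ → ℝ}

namespace ExpIntegrable

lemma integrable (hg : ExpIntegrable μ g) : Integrable g μ := by
  simpa using hg 0

lemma add (hf : ExpIntegrable μ f) (hg : ExpIntegrable μ g) :
    ExpIntegrable μ fun y => f y + g y := fun t => by
  simpa only [mul_add, Pi.add_def] using (hf t).add (hg t)

lemma const_mul (hg : ExpIntegrable μ g) (c : ℝ) : ExpIntegrable μ fun y => c * g y := fun t => by
  simpa only [mul_left_comm] using (hg t).const_mul c

lemma finsetSum {ι : Type*} (s : Finset ι) {F : ι → ℝ → ℝ} (hF : ∀ i ∈ s, ExpIntegrable μ (F i)) :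
    ExpIntegrable μ fun y => ∑ i ∈ s, F i y := fun t => by
  simpa only [Finset.mul_sum] using integrable_finsetSum s fun i hi => hF i hi t

lemma id_mul (hg : ExpIntegrable μ g) : ExpIntegrable μ fun y => y * g y := by
  intro t
  have hmeas : AEStronglyMeasurable (fun y => exp (t * y) * (y * g y)) μ := by
    simpa only [mul_left_comm] using measurable_id'.aestronglyMeasurable.fun_mul (hg t).1
  refine ((hg (t + 1)).norm.add (hg (t - 1)).norm).mono' hmeas (ae_of_all _ fun y => ?_)
  have hy : |y| ≤ exp y + exp (-y) := by
    rcases abs_cases y with ⟨h, -⟩ | ⟨h, -⟩ <;> rw [h] <;>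
      linarith [add_one_le_exp y, add_one_le_exp (-y), exp_pos y, exp_pos (-y)]
  calc ‖exp (t * y) * (y * g y)‖ = |y| * (exp (t * y) * |g y|) := by
        rw [norm_mul, norm_mul, norm_eq_abs, norm_eq_abs, norm_eq_abs, abs_exp]
        ring
    _ ≤ (exp y + exp (-y)) * (exp (t * y) * |g y|) := by gcongr
    _ = ‖exp ((t + 1) * y) * g y‖ + ‖exp ((t - 1) * y) * g y‖ := by
        simp only [norm_mul, norm_eq_abs, abs_exp, add_mul, sub_eq_add_neg, exp_add,
          one_mul, neg_mul]
        ring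

lemma eval_mul (hg : ExpIntegrable μ g) (P : ℝ[X]) : ExpIntegrable μ fun y => P.eval y * g y := by
  induction P using Polynomial.induction_on' with
  | add P Q hP hQ => simpa only [Polynomial.eval_add, add_mul] using ExpIntegrable.add hP hQ
  | monomial n a =>
    simp only [Polynomial.eval_monomial, mul_assoc]
    refine .const_mul ?_ a
    induction n with
    | zero => simpa using hg
    | succ n ih => simpa only [pow_succ', mul_assoc] using ih.id_mul

end ExpIntegrable

lemma laplace_sub_mul (hg : ExpIntegrable μ g) (z t : ℝ) :
    laplace μ (fun y => (y - z) * g y) t = laplace μ (fun y => y * g y) t - z * laplace μ g t := by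
  simp only [laplace, ← integral_const_mul]
  rw [← integral_sub (hg.id_mul t) ((hg t).const_mul z)]
  exact integral_congr_ae (ae_of_all _ fun y => by ring)

lemma hasDerivAt_laplace (hg : ExpIntegrable μ g) (t : ℝ) :
    HasDerivAt (laplace μ g) (laplace μ (fun y => y * g y) t) t := by
  refine (hasDerivAt_integral_of_dominated_loc_of_deriv_le
    (F := fun s y => exp (s * y) * g y) (F' := fun s y => exp (s * y) * (y * g y))
    (bound := fun y => ‖exp ((t - 1) * y) * (y * g y)‖ + ‖exp ((t + 1) * y) * (y * g y)‖)
    (Icc_mem_nhds (sub_one_lt t) (lt_add_one t)) (.of_forall fun s => (hg s).1) (hg t)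
    (hg.id_mul t).1 (ae_of_all _ fun y s hs => ?_)
    ((hg.id_mul _).norm.add (hg.id_mul _).norm) (ae_of_all _ fun y s _ => ?_)).2
  · simp only [norm_mul, norm_eq_abs, abs_exp, ← add_mul]
    exact mul_le_mul_of_nonneg_right (exp_mul_le_add_of_mem_Icc hs y) (by positivity)
  · simpa [mul_assoc] using ((hasDerivAt_mul_const y).exp (x := s)).mul_const (g y)

namespace SignChangesLE

variable {n : ℕ}

private lemma laplace_of_prod_sub {c : ℝ} (hc : c ≠ 0) (Z : Multiset ℝ) (hg : ExpIntegrable μ g)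
    (hsign : ∀ x, 0 ≤ c * (Z.map (x - ·)).prod * g x) :
    SignChangesLE Z.card (laplace μ g) := by
  induction Z using Multiset.induction_on generalizing g with
  | empty =>
    have hnonneg (t : ℝ) : 0 ≤ c * laplace μ g t := by
      rw [laplace, ← integral_const_mul]
      refine integral_nonneg fun y => ?_
      simpa [mul_left_comm] using mul_nonneg (exp_pos (t * y)).le (hsign y)
    simpa [mul_comm c, hc] using (const c⁻¹).nonneg_mul hnonneg
  | cons z Z ih =>
    have hzg : ExpIntegrable μ fun y => (y - z) * g y := by
      simpa using hg.eval_mul (.X - .C z)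
    have hrec : SignChangesLE Z.card (laplace μ fun y => (y - z) * g y) := ih hzg fun x => by
      have := hsign x
      simp only [Multiset.map_cons, Multiset.prod_cons] at this
      linarith
    have hderiv (t : ℝ) : HasDerivAt (fun t => exp (-z * t) * laplace μ g t)
        (exp (-z * t) * laplace μ (fun y => (y - z) * g y) t) t := by
      refine (((hasDerivAt_const_mul (-z)).exp (x := t)).fun_mul
        (hasDerivAt_laplace hg t)).congr_deriv ?_
      rw [laplace_sub_mul hg]
      ring
    have := (of_hasDerivAt hderiv (hrec.nonneg_mul fun t => (exp_pos _).le)).nonneg_mul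
      fun t => (exp_pos (z * t)).le
    simpa [← mul_assoc, ← exp_add] using this

/-- Variation diminishing: multiplying the density by `y - z` amounts to differentiating the
transform after a twist by `exp (-z * t)`, so each sign change of the density costs at most one
application of Rolle's theorem. -/
theorem laplace (hg : SignChangesLE n g) (hint : ExpIntegrable μ g) :
    SignChangesLE n (laplace μ g) := by
  obtain ⟨c, hc, Z, hZ, hsign⟩ := hg.exists_prod_sub
  exact (laplace_of_prod_sub hc Z hint hsign).mono hZ

end SignChangesLE

end Laplace

section Gaussian

lemma expIntegrable_gaussianPDFReal (m : ℝ) (v : ℝ≥0) :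
    ExpIntegrable volume (gaussianPDFReal m v) := by
  intro t
  by_cases hv : v = 0
  · simp [hv]
  have := integrable_exp_mul_gaussianReal (μ := m) (v := v) t
  rw [gaussianReal_of_var_ne_zero m hv, integrable_withDensity_iff_integrable_smul'
    (measurable_gaussianPDF m v) (ae_of_all _ fun _ => gaussianPDF_lt_top)] at this
  simpa only [toReal_gaussianPDF, smul_eq_mul, mul_comm] using this

lemma laplace_gaussianPDFReal (m : ℝ) {v : ℝ≥0} (hv : v ≠ 0) (t : ℝ) :
    laplace volume (gaussianPDFReal m v) t = exp (m * t + v * t ^ 2 / 2) := by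
  rw [← congrFun (mgf_fun_id_gaussianReal (μ := m) (v := v)) t, mgf,
    integral_gaussianReal_eq_integral_smul hv]
  simp only [laplace, smul_eq_mul, mul_comm]

lemma exists_gaussianPDFReal_eq_mul_exp (m : ℝ) (v : ℝ≥0) :
    ∃ c α β : ℝ, ∀ x, gaussianPDFReal m v x = c * exp (α * x ^ 2 + β * x) := by
  refine ⟨(√(2 * π * v))⁻¹ * exp (-m ^ 2 / (2 * v)), -(2 * v : ℝ)⁻¹, m / v, fun x => ?_⟩
  by_cases hv : v = 0
  · simp [hv]
  have hv' : (v : ℝ) ≠ 0 := by simpa using hv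
  rw [gaussianPDFReal, mul_assoc (√_)⁻¹, ← exp_add]
  congr 2
  field_simp
  ring

variable {ι : Type*} {k : ℕ}

lemma SignChangesLE.const_add_laplace {μ : Measure ℝ} {g : ℝ → ℝ} {n : ℕ} (c : ℝ)
    (hg : SignChangesLE n g) (hint : ExpIntegrable μ g) :
    SignChangesLE (n + 2) fun t => c + _root_.laplace μ g t := by
  have hg' : SignChangesLE n fun y => y * (y * g y) := by
    simpa only [mul_assoc] using hg.nonneg_mul fun y => mul_self_nonneg y
  exact of_hasDerivAt (fun t => (hasDerivAt_laplace hint t).const_add c)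
    (of_hasDerivAt (hasDerivAt_laplace hint.id_mul) (hg'.laplace hint.id_mul.id_mul))

variable {s : Finset ι}

/-- Each `exp (α i * x ^ 2 + β i * x)` is the Laplace transform of a Gaussian density, which is
again an exponential of a quadratic. -/
private lemma signChangesLE_const_add_sum_of_pos {n : ℕ}
    (hs : ∀ c α β : ι → ℝ, SignChangesLE n fun x => ∑ i ∈ s, c i * exp (α i * x ^ 2 + β i * x))
    (C : ℝ) (c α β : ι → ℝ) (hα : ∀ i ∈ s, 0 < α i) :
    SignChangesLE (n + 2) fun x => C + ∑ i ∈ s, c i * exp (α i * x ^ 2 + β i * x) := by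
  set G : ι → ℝ → ℝ := fun i => gaussianPDFReal (β i) (2 * α i).toNNReal
  have hG (i : ι) : ExpIntegrable volume fun y => c i * G i y :=
    (expIntegrable_gaussianPDFReal _ _).const_mul _
  choose c' α' β' hG' using fun i => exists_gaussianPDFReal_eq_mul_exp (β i) (2 * α i).toNNReal
  have hsc : SignChangesLE n fun y => ∑ i ∈ s, c i * G i y := by
    simpa only [G, hG', ← mul_assoc] using hs (fun i => c i * c' i) α' β'
  convert hsc.const_add_laplace C (.finsetSum s fun i _ => hG i) with x
  simp only [laplace, Finset.mul_sum]
  rw [integral_finsetSum s fun i _ => hG i x]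
  refine Finset.sum_congr rfl fun i hi => ?_
  have hv : (2 * α i).toNNReal ≠ 0 := (Real.toNNReal_pos.2 (by linarith [hα i hi])).ne'
  have := laplace_gaussianPDFReal (β i) hv x
  rw [Real.coe_toNNReal _ (by linarith [hα i hi])] at this
  simp only [mul_left_comm _ (c i), integral_const_mul]
  rw [show α i * x ^ 2 + β i * x = β i * x + 2 * α i * x ^ 2 / 2 by ring, ← this, laplace]

private lemma signChangesLE_sum_of_const_add {n : ℕ}
    (h : ∀ s : Finset ι, s.card ≤ k → ∀ (C : ℝ) (c α β : ι → ℝ), (∀ i ∈ s, 0 ≤ α i) →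
      SignChangesLE n fun x => C + ∑ i ∈ s, c i * exp (α i * x ^ 2 + β i * x))
    (hs : s.card ≤ k + 1) (c α β : ι → ℝ) :
    SignChangesLE n fun x => ∑ i ∈ s, c i * exp (α i * x ^ 2 + β i * x) := by
  classical
  rcases s.eq_empty_or_nonempty with rfl | hne
  · simpa using h ∅ (by simp) 0 c α β
  obtain ⟨j, hj, hmin⟩ := s.exists_min_image α hne
  have hrest := h (s.erase j) (by rw [Finset.card_erase_of_mem hj]; omega) (c j) c
    (fun i => α i - α j) (fun i => β i - β j)
    fun i hi => sub_nonneg.2 (hmin i (Finset.mem_of_mem_erase hi))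
  convert hrest.nonneg_mul fun x => (exp_pos (α j * x ^ 2 + β j * x)).le using 2 with x
  rw [← Finset.add_sum_erase s _ hj, mul_add, Finset.mul_sum, mul_comm]
  congr 1
  refine Finset.sum_congr rfl fun i _ => ?_
  rw [mul_left_comm, ← exp_add]
  ring_nf

lemma signChangesLE_const_add_sum_exp_quadratic (hs : s.card ≤ k) (C : ℝ) (c α β : ι → ℝ)
    (hα : ∀ i ∈ s, 0 ≤ α i) :
    SignChangesLE (2 * k) fun x => C + ∑ i ∈ s, c i * exp (α i * x ^ 2 + β i * x) := by
  induction k generalizing s C c α β with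
  | zero =>
    simp only [Finset.card_eq_zero.1 (Nat.le_zero.1 hs), Finset.sum_empty, add_zero]
    exact .const C
  | succ k ih =>
    have hpos (ε : ℝ) (hε : 0 < ε) :=
      signChangesLE_const_add_sum_of_pos (signChangesLE_sum_of_const_add (fun _ => ih) hs) C c
        (fun i => α i + ε) β fun i hi => by linarith [hα i hi]
    refine .of_tendsto (u := 𝓝[>] 0) (eventually_mem_nhdsWithin.mono hpos) fun x => ?_
    refine tendsto_nhdsWithin_of_tendsto_nhds (Continuous.tendsto' ?_ _ _ (by simp))
    fun_prop

theorem signChangesLE_sum_exp_quadratic (hs : s.card ≤ k + 1) (c α β : ι → ℝ) :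
    SignChangesLE (2 * k) fun x => ∑ i ∈ s, c i * exp (α i * x ^ 2 + β i * x) :=
  signChangesLE_sum_of_const_add
    (fun _ => signChangesLE_const_add_sum_exp_quadratic) hs c α β

end Gaussian

section Moments

/-- A suitable `R` has the sign changes of `g` among its zeros, so that `S * R * g` is of one
sign. -/
theorem SignChangesLE.eq_zero_of_integral_eq_zero {n : ℕ} {g : ℝ → ℝ} (hg : SignChangesLE n g)
    (hcont : Continuous g) (hint : ExpIntegrable volume g) {S : ℝ[X]} (hS : S ≠ 0)
    (hS_nonneg : ∀ x, 0 ≤ S.eval x)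
    (h : ∀ R : ℝ[X], R.natDegree ≤ n → ∫ x, (S * R).eval x * g x = 0) : g = 0 := by
  obtain ⟨c, hc, Z, hZ, hsign⟩ := hg.exists_prod_sub
  set R : ℝ[X] := (Z.map (Polynomial.X - Polynomial.C ·)).prod
  have hR (x : ℝ) : R.eval x = (Z.map (x - ·)).prod := by
    simp [R, Polynomial.eval_multiset_prod, Multiset.map_map]
  have hSR : S * R ≠ 0 :=
    mul_ne_zero hS (Polynomial.monic_multiset_prod_of_monic Z _ fun z _ =>
      Polynomial.monic_X_sub_C z).ne_zero
  have hnonneg (x : ℝ) : 0 ≤ c * ((S * R).eval x * g x) := by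
    rw [Polynomial.eval_mul, hR]
    linear_combination mul_nonneg (hS_nonneg x) (hsign x)
  have hzero : ∫ x, c * ((S * R).eval x * g x) = 0 := by
    rw [integral_const_mul, h R (by simpa [R] using hZ), mul_zero]
  have hae := (integral_eq_zero_iff_of_nonneg hnonneg
    ((hint.eval_mul (S * R)).integrable.const_mul c)).1 hzero
  have hroot : ∀ᵐ x : ℝ, ¬(S * R).IsRoot x :=
    compl_mem_ae_iff (s := {x | (S * R).IsRoot x}).2
      ((Polynomial.finite_setOfPred_isRoot hSR).measure_zero _)
  refine (hcont.ae_eq_iff_eq volume continuous_zero).1 ?_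
  filter_upwards [hae, hroot] with x hx hxroot
  exact ((mul_eq_zero.1 ((mul_eq_zero.1 hx).resolve_left hc)).resolve_left hxroot)

variable {ι : Type*} [Fintype ι]

lemma sum_mul_integral_eval_eq_zero {μ : ι → Measure ℝ} {c : ι → ℝ} {N : ℕ}
    (hμ : ∀ i n, Integrable (fun x => x ^ n) (μ i))
    (h : ∀ n ≤ N, ∑ i, c i * ∫ x, x ^ n ∂μ i = 0) {P : ℝ[X]} (hP : P.natDegree ≤ N) :
    ∑ i, c i * ∫ x, P.eval x ∂μ i = 0 := by
  calc ∑ i, c i * ∫ x, P.eval x ∂μ i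
      = ∑ i, ∑ n ∈ Finset.range (P.natDegree + 1), P.coeff n * (c i * ∫ x, x ^ n ∂μ i) := by
        refine Finset.sum_congr rfl fun i _ => ?_
        simp only [Polynomial.eval_eq_sum_range]
        rw [integral_finsetSum _ fun n _ => (hμ i n).const_mul _, Finset.mul_sum]
        simp only [integral_const_mul, mul_left_comm]
    _ = ∑ n ∈ Finset.range (P.natDegree + 1), P.coeff n * ∑ i, c i * ∫ x, x ^ n ∂μ i := by
        rw [Finset.sum_comm]
        simp only [Finset.mul_sum]
    _ = 0 := Finset.sum_eq_zero fun n hn => by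
        rw [h n (by have := Finset.mem_range.1 hn; omega), mul_zero]

lemma integrable_pow_gaussianReal (m : ℝ) (v : ℝ≥0) (n : ℕ) :
    Integrable (fun x => x ^ n) (gaussianReal m v) :=
  integrable_pow_of_mem_interior_integrableExpSet (X := id) (by simp) n

/-- When `v = 0` the density is `0` although the measure is a Dirac mass. -/
lemma integral_mul_gaussianPDFReal {m : ℝ} {v : ℝ≥0} {f : ℝ → ℝ} (h : v = 0 → f m = 0) :
    ∫ x, f x * gaussianPDFReal m v x = ∫ x, f x ∂gaussianReal m v := by
  by_cases hv : v = 0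
  · simp [hv, gaussianReal_zero_var, h hv]
  · rw [integral_gaussianReal_eq_integral_smul hv]
    simp only [smul_eq_mul, mul_comm]

lemma continuous_gaussianPDFReal (m : ℝ) (v : ℝ≥0) : Continuous (gaussianPDFReal m v) := by
  unfold gaussianPDFReal
  fun_prop

lemma integral_eval_mul_sum_gaussianPDFReal (c a : ι → ℝ) (v : ι → ℝ≥0) {P : ℝ[X]}
    (hP : ∀ i, v i = 0 → P.eval (a i) = 0) :
    ∫ x, P.eval x * ∑ i, c i * gaussianPDFReal (a i) (v i) x =
      ∑ i, c i * ∫ x, P.eval x ∂gaussianReal (a i) (v i) := by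
  simp only [Finset.mul_sum, mul_left_comm _ (c _)]
  rw [integral_finsetSum _ fun i _ =>
    ((expIntegrable_gaussianPDFReal _ _).eval_mul P).integrable.const_mul (c i)]
  exact Finset.sum_congr rfl fun i _ => by
    rw [integral_const_mul, integral_mul_gaussianPDFReal (hP i)]

lemma signChangesLE_sum_gaussianPDFReal {k : ℕ} (c a : ι → ℝ) (v : ι → ℝ≥0)
    (hv : Finset.card {i | v i ≠ 0} ≤ k + 1) :
    SignChangesLE (2 * k) fun x => ∑ i, c i * gaussianPDFReal (a i) (v i) x := by
  choose c' α β hpdf using fun i => exists_gaussianPDFReal_eq_mul_exp (a i) (v i)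
  convert signChangesLE_sum_exp_quadratic hv (fun i => c i * c' i) α β using 2 with x
  simp only [mul_assoc, ← hpdf]
  refine (Finset.sum_filter_of_ne fun i _ hi => ?_).symm
  contrapose! hi
  simp [hi]

/-- The test polynomial `S` is zero at the Dirac masses of the mixture, with double zeros to keep it
nonnegative: each Dirac mass thus costs two moments, exactly what it saves in sign changes. -/
theorem sum_mul_gaussianPDFReal_eq_zero {k : ℕ} (hι : Fintype.card ι ≤ k + 1) (c a : ι → ℝ)
    (v : ι → ℝ≥0) (h : ∀ n ≤ 2 * k, ∑ i, c i * ∫ x, x ^ n ∂gaussianReal (a i) (v i) = 0) (x : ℝ) :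
    ∑ i, c i * gaussianPDFReal (a i) (v i) x = 0 := by
  by_cases hv : ∀ i, v i = 0
  · simp [hv]
  set S : ℝ[X] := (∏ i with v i = 0, (Polynomial.X - Polynomial.C (a i))) ^ 2
  have hS : S.Monic := (Polynomial.monic_prod_X_sub_C _ _).pow 2
  have hSdeg : S.natDegree = 2 * Finset.card {i | v i = 0} := by simp [S]
  have hSroot (i : ι) (hi : v i = 0) : S.eval (a i) = 0 := by
    rw [Polynomial.eval_pow, Polynomial.eval_prod,
      Finset.prod_eq_zero (Finset.mem_filter.2 ⟨Finset.mem_univ i, hi⟩) (by simp),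
      zero_pow two_ne_zero]
  obtain ⟨j, hj⟩ : ∃ j, Finset.card {i | v i ≠ 0} = j + 1 := by
    obtain ⟨i, hi⟩ := not_forall.1 hv
    exact Nat.exists_eq_add_one.2 (Finset.card_pos.2 ⟨i, by simpa using hi⟩)
  have hcard : Finset.card {i | v i = 0} + (j + 1) ≤ k + 1 := by
    rwa [← hj, Finset.card_filter_add_card_filter_not]
  refine congrFun (SignChangesLE.eq_zero_of_integral_eq_zero
    (signChangesLE_sum_gaussianPDFReal c a v hj.le) ?_ ?_ hS.ne_zero (fun x => ?_) fun R hR => ?_) x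
  · exact continuous_finsetSum _ fun i _ => (continuous_gaussianPDFReal _ _).const_mul _
  · exact .finsetSum _ fun i _ => (expIntegrable_gaussianPDFReal _ _).const_mul _
  · simpa only [S, Polynomial.eval_pow] using sq_nonneg _
  · rw [integral_eval_mul_sum_gaussianPDFReal c a v fun i hi => by simp [hSroot i hi]]
    refine sum_mul_integral_eval_eq_zero (fun i => integrable_pow_gaussianReal _ _) h ?_
    have := Polynomial.natDegree_mul_le (p := S) (q := R)
    omega

end Moments

section Derivatives

lemma iteratedDeriv_mul_eq_zero {n : ℕ} {f g : ℝ → ℝ} {x : ℝ} (hf : ContDiffAt ℝ n f x)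
    (hg : ContDiffAt ℝ n g x) (h : ∀ i ≤ n, iteratedDeriv i f x = 0) :
    iteratedDeriv n (fun t => f t * g t) x = 0 := by
  rw [iteratedDeriv_fun_mul hf hg]
  exact Finset.sum_eq_zero fun i hi => by
    rw [h i (Finset.mem_range_succ_iff.1 hi), mul_zero, zero_mul]

lemma iteratedDeriv_succ_id_mul_zero {n : ℕ} {f : ℝ → ℝ} (hf : ContDiff ℝ (n + 1) f) :
    iteratedDeriv (n + 1) (fun t => t * f t) 0 = (n + 1) * iteratedDeriv n f 0 := by
  rw [iteratedDeriv_fun_mul (by fun_prop) hf.contDiffAt, Finset.sum_eq_single 1]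
  · simp [iteratedDeriv_one]
  · intro i _ hi
    rw [iteratedDeriv_fun_id_zero, if_neg hi, mul_zero, zero_mul]
  · simp

lemma deriv_exp_mul_sq (b : ℝ) :
    deriv (fun t => exp (b * t ^ 2)) = fun t => 2 * b * (t * exp (b * t ^ 2)) := by
  funext t
  rw [((hasDerivAt_pow 2 t).const_mul b).exp.deriv]
  push_cast
  ring

lemma iteratedDeriv_add_two_exp_mul_sq_zero (b : ℝ) (n : ℕ) :
    iteratedDeriv (n + 2) (fun t => exp (b * t ^ 2)) 0 =
      2 * b * (n + 1) * iteratedDeriv n (fun t => exp (b * t ^ 2)) 0 := by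
  rw [iteratedDeriv_succ', deriv_exp_mul_sq, iteratedDeriv_const_mul_field,
    iteratedDeriv_succ_id_mul_zero (by fun_prop)]
  ring

lemma iteratedDeriv_exp_mul_sq_zero_div_factorial (b : ℝ) (n : ℕ) :
    iteratedDeriv n (fun t => exp (b * t ^ 2)) 0 / n.factorial =
      if Even n then b ^ (n / 2) / (n / 2).factorial else 0 := by
  induction n using Nat.twoStepInduction with
  | zero => simp
  | one => simp [iteratedDeriv_one, deriv_exp_mul_sq]
  | more n ih _ =>
    have hstep : iteratedDeriv (n + 2) (fun t => exp (b * t ^ 2)) 0 / (n + 2).factorial =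
        2 * b / (n + 2) * (iteratedDeriv n (fun t => exp (b * t ^ 2)) 0 / n.factorial) := by
      rw [iteratedDeriv_add_two_exp_mul_sq_zero, Nat.factorial_succ, Nat.factorial_succ]
      push_cast
      field_simp
      ring
    rw [hstep, ih]
    rcases n.even_or_odd' with ⟨k, rfl | rfl⟩
    · have : (2 * k + 2) / 2 = k + 1 := by omega
      simp only [even_two_mul, Nat.even_add, even_two, if_true, this, ne_eq, OfNat.ofNat_ne_zero,
        not_false_eq_true, mul_div_cancel_left₀, Nat.factorial_succ]
      push_cast
      field_simp
      ring
    · simp [parity_simps]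

lemma iteratedDeriv_exp_quadratic_zero_div_factorial (a b : ℝ) (n : ℕ) :
    iteratedDeriv n (fun t => exp (a * t + b * t ^ 2)) 0 / n.factorial =
      ∑ x ∈ antidiagonal n with Even x.2,
        a ^ x.1 * b ^ (x.2 / 2) / (x.1.factorial * (x.2 / 2).factorial) := by
  simp only [exp_add]
  rw [iteratedDeriv_fun_mul (by fun_prop) (by fun_prop), Finset.sum_div, Finset.sum_filter,
    Finset.Nat.sum_antidiagonal_eq_sum_range_succ_mk]
  refine Finset.sum_congr rfl fun i hi => ?_
  have hchoose := Nat.cast_choose ℝ (Finset.mem_range_succ_iff.1 hi)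
  calc n.choose i * iteratedDeriv i (fun t => exp (a * t)) 0 *
        iteratedDeriv (n - i) (fun t => exp (b * t ^ 2)) 0 / n.factorial
      = a ^ i / i.factorial *
        (iteratedDeriv (n - i) (fun t => exp (b * t ^ 2)) 0 / (n - i).factorial) := by
        simp only [hchoose, iteratedDeriv_exp_const_mul, mul_zero, exp_zero]
        field_simp
    _ = _ := by
        rw [iteratedDeriv_exp_mul_sq_zero_div_factorial, mul_ite, mul_zero, div_mul_div_comm]

lemma sum_Jset_zero (f : ℕ × ℕ × ℕ × ℕ × ℕ → ℝ) (n : ℕ) :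
    ∑ α ∈ Jset 0 n, f α =
      ∑ x ∈ antidiagonal n with Even x.2, f (0, 0, 0, x.1, x.2 / 2) := by
  refine Finset.sum_nbij' (fun α => (α.2.2.2.1, 2 * α.2.2.2.2))
    (fun x => (0, 0, 0, x.1, x.2 / 2)) ?_ ?_ ?_ ?_ ?_
  · simp +contextual [Jset]
  · simp only [Finset.mem_filter, Finset.HasAntidiagonal.mem_antidiagonal, Jset,
      Finset.mem_product, Finset.mem_range]
    grind
  · simp +contextual [Jset]
  · simp +contextual [Nat.two_mul_div_two_of_even]
  · simp +contextual [Jset]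

lemma tildeEq_zero_eq_iteratedDeriv (m : ℕ) (p q1 q2 q3 q4 q5 : Fin m → ℝ) (n : ℕ) :
    tildeEq m p q1 q2 q3 q4 q5 0 n =
      iteratedDeriv n (fun t => ∑ l, p l ^ 2 * exp (q4 l * t + q5 l * t ^ 2)) 0 / n.factorial := by
  rw [iteratedDeriv_fun_sum fun l _ => by fun_prop, Finset.sum_div]
  refine Finset.sum_congr rfl fun l _ => ?_
  rw [iteratedDeriv_const_mul_field, mul_div_assoc,
    iteratedDeriv_exp_quadratic_zero_div_factorial, sum_Jset_zero, Finset.mul_sum]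
  simp [mul_div_assoc, mul_assoc]

end Derivatives

section ExponentialSums

variable {ι : Type*} [Fintype ι] {k : ℕ}

lemma sum_mul_integral_pow_gaussianReal (c a : ι → ℝ) (v : ι → ℝ≥0) (n : ℕ) :
    ∑ i, c i * ∫ x, x ^ n ∂gaussianReal (a i) (v i) =
      iteratedDeriv n (fun t => ∑ i, c i * exp (a i * t + v i * t ^ 2 / 2)) 0 := by
  rw [iteratedDeriv_fun_sum fun i _ => by fun_prop]
  refine Finset.sum_congr rfl fun i _ => ?_
  rw [iteratedDeriv_const_mul_field, ← mgf_fun_id_gaussianReal, iteratedDeriv_mgf_zero (by simp)]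
  rfl

lemma sum_filter_var_eq_zero (hι : Fintype.card ι ≤ k + 1) (c a : ι → ℝ) (v : ι → ℝ≥0)
    (h : ∀ n ≤ 2 * k, ∑ i, c i * ∫ x, x ^ n ∂gaussianReal (a i) (v i) = 0) :
    ∑ i with v i = 0, c i = 0 := by
  have hpos : ∑ i with v i ≠ 0, c i = 0 := by
    calc ∑ i with v i ≠ 0, c i = ∫ x, ∑ i, c i * gaussianPDFReal (a i) (v i) x := by
          rw [integral_finsetSum _ fun i _ => (integrable_gaussianPDFReal _ _).const_mul _,
            Finset.sum_filter]
          refine Finset.sum_congr rfl fun i _ => ?_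
          split_ifs with hi
          · rw [integral_const_mul, integral_gaussianPDFReal_eq_one _ hi, mul_one]
          · simp [not_not.1 hi]
      _ = 0 := by simp [sum_mul_gaussianPDFReal_eq_zero hι c a v h]
  have htotal : ∑ i, c i = 0 := by simpa using h 0 (Nat.zero_le _)
  rw [← Finset.sum_filter_add_sum_filter_not _ (v · = 0), hpos, add_zero] at htotal
  exact htotal

theorem sum_filter_eq_zero_of_iteratedDeriv_eq_zero {c a b : ι → ℝ}
    (hι : Fintype.card ι ≤ k + 1)
    (h : ∀ n ≤ 2 * k, iteratedDeriv n (fun t => ∑ i, c i * exp (a i * t + b i * t ^ 2)) 0 = 0)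
    {b₀ : ℝ} (hb : ∀ i, b₀ ≤ b i) : ∑ i with b i = b₀, c i = 0 := by
  have hv (i : ι) : ((2 * (b i - b₀)).toNNReal : ℝ) = 2 * (b i - b₀) :=
    Real.coe_toNNReal _ (by linarith [hb i])
  have := sum_filter_var_eq_zero hι c a (fun i => (2 * (b i - b₀)).toNNReal) fun n hn => by
    have htwist : (fun t => ∑ i, c i * exp (a i * t + 2 * (b i - b₀) * t ^ 2 / 2)) = fun t =>
        (∑ i, c i * exp (a i * t + b i * t ^ 2)) * exp (-b₀ * t ^ 2) := by
      funext t
      rw [Finset.sum_mul]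
      refine Finset.sum_congr rfl fun i _ => ?_
      rw [mul_assoc (c i), ← exp_add]
      ring_nf
    rw [sum_mul_integral_pow_gaussianReal]
    simp only [hv]
    rw [htwist]
    exact iteratedDeriv_mul_eq_zero (by fun_prop) (by fun_prop) fun i hi => h i (hi.trans hn)
  convert this using 3 with i
  rw [← NNReal.coe_eq_zero, hv]
  constructor <;> intro <;> linarith

end ExponentialSums

section TildeSystem

theorem tildeSol.mono {m r r' : ℕ} (hr : r ≤ r') (h : tildeSol m r') : tildeSol m r := by
  obtain ⟨p, q1, q2, q3, q4, q5, hp, hq4, heq⟩ := h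
  exact ⟨p, q1, q2, q3, q4, q5, hp, hq4, fun l1 l2 hpos hle => heq l1 l2 hpos (hle.trans hr)⟩

lemma tildeEq_zero_two {m : ℕ} (p q1 q2 q3 q4 q5 : Fin m → ℝ) :
    tildeEq m p q1 q2 q3 q4 q5 0 2 = ∑ l, p l ^ 2 * (q4 l ^ 2 / 2 + q5 l) := by
  refine Finset.sum_congr rfl fun l _ => ?_
  rw [show Jset 0 2 = {(0, 0, 0, 2, 0), (0, 0, 0, 0, 1)} by decide, Finset.sum_pair (by decide)]
  norm_num [Nat.factorial]
  ring

lemma exists_neg_of_tildeEq_zero_two {m : ℕ} {p q1 q2 q3 q4 q5 : Fin m → ℝ}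
    (hp : ∀ l, p l ≠ 0) (hq4 : ∃ l, q4 l ≠ 0) (h : tildeEq m p q1 q2 q3 q4 q5 0 2 = 0) :
    ∃ l, q5 l < 0 := by
  by_contra! hnonneg
  obtain ⟨l₁, hl₁⟩ := hq4
  have hterm (l : Fin m) : 0 ≤ p l ^ 2 * (q4 l ^ 2 / 2 + q5 l) :=
    mul_nonneg (sq_nonneg _) (add_nonneg (by positivity) (hnonneg l))
  have hpos : 0 < p l₁ ^ 2 * (q4 l₁ ^ 2 / 2 + q5 l₁) :=
    mul_pos (sq_pos_of_ne_zero (hp l₁)) (add_pos_of_pos_of_nonneg (by positivity) (hnonneg l₁))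
  exact (Finset.sum_pos' (fun l _ => hterm l) ⟨l₁, Finset.mem_univ _, hpos⟩).ne'
    (tildeEq_zero_two p q1 q2 q3 q4 q5 ▸ h)

/-- The constant term of the exponential sum is not prescribed by the system; subtracting it as an
extra exponential with `a = b = 0` leaves `m + 1` exponentials. -/
theorem not_tildeSol_two_mul (m : ℕ) : ¬ tildeSol m (2 * m) := by
  rintro ⟨p, q1, q2, q3, q4, q5, hp, ⟨l₁, hl₁⟩, heq⟩
  have : Nonempty (Fin m) := ⟨l₁⟩
  obtain ⟨l₀, hmin⟩ := Finite.exists_min q5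
  have hneg : q5 l₀ < 0 := by
    obtain ⟨l, hl⟩ := exists_neg_of_tildeEq_zero_two hp ⟨l₁, hl₁⟩
      (heq 0 2 (by norm_num) (by have := l₁.pos; omega))
    exact (hmin l).trans_lt hl
  set W := ∑ l, p l ^ 2
  set c : Option (Fin m) → ℝ := fun i => i.elim (-W) fun l => p l ^ 2
  set a : Option (Fin m) → ℝ := fun i => i.elim 0 q4
  set b : Option (Fin m) → ℝ := fun i => i.elim 0 q5
  have hderiv (n : ℕ) (hn : n ≤ 2 * m) :
      iteratedDeriv n (fun t => ∑ i, c i * exp (a i * t + b i * t ^ 2)) 0 = 0 := by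
    simp only [Fintype.sum_option, c, a, b, Option.elim]
    rcases n.eq_zero_or_pos with rfl | hpos
    · simp [W]
    · have := heq 0 n (by omega) (by omega)
      rw [tildeEq_zero_eq_iteratedDeriv, div_eq_zero_iff] at this
      simpa [iteratedDeriv_const_add hpos, Nat.factorial_ne_zero] using this
  have hsum := sum_filter_eq_zero_of_iteratedDeriv_eq_zero (by simp) hderiv (b₀ := q5 l₀)
    (by rintro (_ | l); exacts [hneg.le, hmin l])
  refine (Finset.sum_pos (fun i hi => ?_) ⟨some l₀, by simp [b]⟩).ne' hsum
  rcases i with _ | l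
  · simp [b, hneg.ne'] at hi
  · exact sq_pos_of_ne_zero (hp l)

/-- Three-point Gauss–Hermite quadrature, whose nodes are `-√3, 0, √3` and whose weights are in the
ratio `1 : 4 : 1`, rescaled to variance `1 / 3`. At the values suggested in the informal statement
the `(0, 4)` equation has left-hand side `-1 / 54`. -/
theorem tildeSol_three_five : tildeSol 3 5 := by
  refine ⟨![1, 1, 2], 0, 0, 0, ![1, -1, 0], fun _ => -1 / 6, ?_, ⟨0, by simp⟩,
    fun l1 l2 hpos hle => ?_⟩
  · intro l
    fin_cases l <;> simp
  rcases l1.eq_zero_or_pos with rfl | hl1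
  · rw [tildeEq]
    simp only [sum_Jset_zero, Finset.sum_filter]
    have hn : 1 ≤ l2 := by omega
    have hn' : l2 ≤ 5 := by omega
    interval_cases l2 <;>
      norm_num [Fin.sum_univ_succ, Finset.Nat.sum_antidiagonal_succ, Nat.factorial, parity_simps]
  · refine Finset.sum_eq_zero fun l _ => Finset.sum_eq_zero fun α hα => ?_
    have hα1 := (Finset.mem_filter.1 hα).2.1
    have : α.1 ≠ 0 ∨ α.2.1 ≠ 0 ∨ α.2.2.1 ≠ 0 := by omega
    rcases this with h | h | h <;> simp [zero_pow h]

end TildeSystem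

/-- `r̃(3) = 6`: the tilde-system of order `(3, 6)` admits no non-trivial solution,
while the tilde-system of order `(3, 5)` does admit a non-trivial solution. -/
theorem rtilde_three_eq_six : rtilde 3 = 6 ∧ ¬ tildeSol 3 6 ∧ tildeSol 3 5 := by
  have hsix : ¬ tildeSol 3 6 := not_tildeSol_two_mul 3
  refine ⟨le_antisymm (Nat.sInf_le ⟨by norm_num, hsix⟩) ?_, hsix, tildeSol_three_five⟩
  refine le_csInf ⟨6, by norm_num, hsix⟩ fun r hr => ?_
  by_contra hlt
  exact hr.2 (tildeSol_three_five.mono (by omega))
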